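/- Let p be an odd prime, let (G, H, T) be a faithful RCC loop folder of order 2p with ⟨T⟩ = G, and let K be a subgroup of G with H ≤ K ≤ G, |G : K| = 2 and |K : H| = p. Set T₁ := T ∩ K, K₁ := ⟨T₁⟩ and H₁ := H ∩ K₁. Then |H₁| ∈ {1, p}, and K₁ is elementary abelian of order p or p² (that is, K₁ is abelian, x^p = 1 for every x ∈ K₁, and |K₁| = p·|H₁| ∈ {p, p²}). -/

import Mathlib

/-- A loop folder `(G, H, T)`: `T` contains `1` and is a transversal for the right cosets
of every conjugate `H^g = g⁻¹Hg` of `H` in `G` (note `H^g x = H^g t ↔ g*(x*t⁻¹)*g⁻¹ ∈ H`). -/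
def IsLoopFolder {G : Type*} [Group G] (H : Subgroup G) (T : Set G) : Prop :=
  (1 : G) ∈ T ∧ ∀ g x : G, ∃! t, t ∈ T ∧ g * (x * t⁻¹) * g⁻¹ ∈ H

/-- The loop folder is right conjugacy closed: `T` is invariant under conjugation by `G`. -/
def IsRCC {G : Type*} [Group G] (T : Set G) : Prop :=
  ∀ t ∈ T, ∀ g : G, g⁻¹ * t * g ∈ T

/-- The loop folder is faithful: the core `⋂_{g ∈ G} g⁻¹Hg` of `H` in `G` is trivial. -/
def IsFaithfulFolder {G : Type*} [Group G] (H : Subgroup G) : Prop :=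
  ∀ x : G, (∀ g : G, g * x * g⁻¹ ∈ H) → x = 1

/-!
Since `T ∩ K` is a transversal both of `H` in `K` and of `H₁ = H ∩ K₁` in `K₁ = ⟨T ∩ K⟩`, the folder
`(K₁, H₁, T ∩ K)` is an RCC loop folder of prime order `p`. There `H₁` is normal: the centralizer
`C` of a nontrivial `t ∈ T ∩ K` has index less than `p`, so `H₁` has index `p` in `H₁C = K₁`, and
`H₁ ∩ C` is normal in `C` because it has prime index and misses the central element `t`. Hence
`H₁ ∩ C` lies in the core `N` of `H₁`, so `|CN : N| = p`. As `CN` has index less than `p`, two such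
subgroups `CN` must coincide, and they contain all generators of `K₁`, so `|K₁ : N| = p` and
`H₁ = N`.

Now `K₁/H₁` is cyclic of order `p`, so the commutators and the `p`-th powers of elements of the
normal subgroup `K₁` of `G` lie in the core of `H`, which is trivial. Finally `H₁` is normal in
`HK₁ = K`; if `g ∉ K`, then `H₁ ∩ H₁^g` is normal in `G`, hence trivial, so that `|H₁|` divides
`|K₁ : H₁^g| = p`.
-/

section

open Subgroup

variable {G : Type*} [Group G] {H K M : Subgroup G} {S T : Set G}

theorem relIndex_le_index [H.FiniteIndex] : H.relIndex K ≤ H.index := by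
  rw [← relIndex_top_right]
  exact relIndex_le_of_le_right le_top (relIndex_top_right H ▸ FiniteIndex.index_ne_zero)

theorem eq_of_le_of_index_eq [H.FiniteIndex] (hHK : H ≤ K) (h : H.index = K.index) : H = K :=
  hHK.eq_of_not_lt fun hlt ↦ (index_strictAnti hlt).ne' h

theorem relIndex_eq_index_of_coprime [H.FiniteIndex] (h : H.index.Coprime K.index) :
    H.relIndex K = H.index := by
  have hdvd : H.index ∣ H.relIndex K * K.index := by
    rw [← inf_relIndex_right, relIndex_mul_index inf_le_right]
    exact index_dvd_of_le inf_le_left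
  have hpos : 0 < H.relIndex K :=
    Nat.pos_of_ne_zero (mt index_eq_zero_of_relIndex_eq_zero FiniteIndex.index_ne_zero)
  exact le_antisymm relIndex_le_index (Nat.le_of_dvd hpos (h.dvd_of_dvd_mul_right hdvd))

theorem exists_inv_mul_mem_of_relIndex_eq_index [H.FiniteIndex] (h : H.relIndex K = H.index)
    (g : G) : ∃ k ∈ K, k⁻¹ * g ∈ H := by
  have hstab : MulAction.stabilizer K ((1 : G) : G ⧸ H) = H.subgroupOf K := by
    ext k
    change (((k : G) * 1 : G) : G ⧸ H) = ((1 : G) : G ⧸ H) ↔ (k : G) ∈ H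
    rw [mul_one, eq_comm, QuotientGroup.eq, inv_one, one_mul]
  have horbit : MulAction.orbit K ((1 : G) : G ⧸ H) = Set.univ := by
    refine Set.eq_of_subset_of_ncard_le (Set.subset_univ _) ?_
    rw [← MulAction.index_stabilizer, hstab, Set.ncard_univ, ← index_eq_card]
    exact h.ge
  obtain ⟨k, hk⟩ := horbit.ge (Set.mem_univ (g : G ⧸ H))
  have hkg : (((k : G) * 1 : G) : G ⧸ H) = (g : G ⧸ H) := hk
  exact ⟨k, k.2, QuotientGroup.eq.1 (by rwa [mul_one] at hkg)⟩

theorem inf_le_normalCore_of_relIndex_eq_index [H.FiniteIndex] (h : H.relIndex K = H.index)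
    (hK : (H.subgroupOf K).Normal) : H ⊓ K ≤ H.normalCore := by
  intro x hx g
  obtain ⟨k, hk, hkg⟩ := exists_inv_mul_mem_of_relIndex_eq_index h g⁻¹
  have hkx : k⁻¹ * x * k ∈ H := by
    simpa [mem_subgroupOf] using hK.conj_mem ⟨x, hx.2⟩ hx.1 ⟨k, hk⟩⁻¹
  convert! H.mul_mem (H.mul_mem (H.inv_mem hkg) hkx) hkg using 1
  group

theorem normal_of_index_prime_of_not_center_le (hp : H.index.Prime) (h : ¬ center G ≤ H) :
    H.Normal := by
  have : H.FiniteIndex := ⟨hp.ne_zero⟩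
  rw [← normalizer_eq_top_iff, ← index_eq_one]
  have hdvd := index_dvd_of_le H.le_normalizer
  refine (hp.eq_one_or_self_of_dvd _ hdvd).resolve_right fun hindex ↦ h ?_
  exact (center_le_normalizer _).trans_eq (eq_of_le_of_index_eq H.le_normalizer hindex.symm).symm

theorem relIndex_normalCore_centralizer {t : G} [(centralizer {t}).FiniteIndex]
    (hp : H.index.Prime) (ht : t ∉ H) (hC : (centralizer {t}).index < H.index) :
    H.normalCore.relIndex (centralizer {t}) = H.index := by
  have : H.FiniteIndex := ⟨hp.ne_zero⟩
  have hrel : H.relIndex (centralizer {t}) = H.index :=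
    relIndex_eq_index_of_coprime
      (Nat.coprime_of_lt_prime FiniteIndex.index_ne_zero hC hp)
  have hnormal : (H.subgroupOf (centralizer {t})).Normal := by
    have hp' : (H.relIndex (centralizer {t})).Prime := hrel.symm ▸ hp
    refine normal_of_index_prime_of_not_center_le hp' fun hcenter ↦ ht ?_
    have htC : t ∈ centralizer {t} := mem_centralizer_singleton_iff.2 rfl
    refine hcenter (x := ⟨t, htC⟩) (mem_center_iff.2 fun c ↦ Subtype.ext ?_)
    exact mem_centralizer_singleton_iff.1 c.2
  rw [← hrel, ← inf_relIndex_right, ← inf_relIndex_right H]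
  congr 1
  exact le_antisymm (inf_le_inf_right _ H.normalCore_le)
    (le_inf (inf_le_normalCore_of_relIndex_eq_index hrel hnormal) inf_le_right)

theorem le_of_index_lt_relIndex_prime [K.FiniteIndex] (hHK : H ≤ K) (hp : (H.relIndex M).Prime)
    (hlt : K.index < H.relIndex M) : M ≤ K :=
  relIndex_eq_one.1 <|
    (hp.eq_one_or_self_of_dvd _ (relIndex_dvd_of_le_left M hHK)).resolve_right
      (relIndex_le_index.trans_lt hlt).ne

theorem index_centralizer_singleton (g : G) :
    (centralizer {g}).index = (conjugatesOf g).ncard := by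
  have horbit : MulAction.orbit (ConjAct G) g = conjugatesOf g := by
    ext x
    exact ConjAct.mem_orbit_conjAct.trans isConj_comm
  rw [centralizer_eq_comap_stabilizer, ← horbit, ← MulAction.index_stabilizer]
  exact index_comap_of_surjective _ ConjAct.toConjAct.surjective

theorem commutator_le_of_relIndex_prime [(H.subgroupOf M).Normal] (hp : (H.relIndex M).Prime) :
    ⁅M, M⁆ ≤ H := by
  have : Fact (H.relIndex M).Prime := ⟨hp⟩
  have : IsCyclic (M ⧸ H.subgroupOf M) :=
    isCyclic_of_prime_card (p := H.relIndex M) rfl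
  rw [← map_subtype_commutator, map_le_iff_le_comap]
  exact Normal.quotient_commutative_iff_commutator_le (N := H.subgroupOf M).1
    IsCyclic.isMulCommutative

theorem mem_normalCore_of_index_two {x g : G} (hK : K.index = 2) (hKH : K ≤ normalizer H)
    (hg : g ∉ K) (hx : x ∈ H) (hgx : g * x * g⁻¹ ∈ H) : x ∈ H.normalCore := by
  intro k
  by_cases hk : k ∈ K
  · exact le_normalizer_iff.1 hKH k hk x hx
  · have hkg : k * g⁻¹ ∈ K := by simp [mul_mem_iff_of_index_two hK, hk, hg]
    convert! le_normalizer_iff.1 hKH _ hkg _ hgx using 1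
    group

theorem sup_le_normalizer_inf [M.Normal] [IsMulCommutative M] :
    H ⊔ M ≤ normalizer (H ⊓ M : Subgroup G) := by
  refine sup_le ?_ (le_normalizer_iff.2 fun m hm x hx ↦ ?_)
  · exact (le_inf H.le_normalizer le_normalizer_of_normal).trans inf_normalizer_le_normalizer_inf
  · rwa [setLike_mul_comm hm hx.2, mul_inv_cancel_right]

theorem IsRCC.sdiff_one (hT : IsRCC T) : IsRCC (T \ {1}) := fun t ht g ↦
  ⟨hT t ht.1 g, by simpa [mul_assoc, inv_mul_eq_one, eq_comm] using ht.2⟩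

theorem IsRCC.inter [K.Normal] (hT : IsRCC T) : IsRCC (T ∩ K) := fun t ht g ↦
  ⟨hT t ht.1 g, by simpa using Normal.conj_mem inferInstance t ht.2 g⁻¹⟩

theorem IsRCC.preimage {G' : Type*} [Group G'] (hT : IsRCC T) (f : G' →* G) :
    IsRCC (f ⁻¹' T) := fun t ht g ↦ by
  simpa using hT (f t) ht (f g)

theorem IsRCC.conjugatesOf_subset (hT : IsRCC T) {t : G} (ht : t ∈ T) : conjugatesOf t ⊆ T := by
  intro x hx
  obtain ⟨g, rfl⟩ := isConj_iff.1 hx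
  simpa using hT t ht g⁻¹

theorem IsRCC.normal_closure (hT : IsRCC T) : (closure T).Normal := by
  refine normalizer_eq_top_iff.1 (eq_top_iff.2 (le_normalizer_closure_iff.2 fun g _ t ht ↦ ?_))
  simpa using subset_closure (hT t ht g⁻¹)

theorem IsRCC.index_centralizer_le_ncard (hS : IsRCC S) (hfin : S.Finite) {s : G} (hs : s ∈ S) :
    (centralizer {s}).index ≤ S.ncard := by
  rw [index_centralizer_singleton]
  exact Set.ncard_le_ncard (hS.conjugatesOf_subset hs) hfin

theorem IsRCC.finiteIndex_centralizer (hS : IsRCC S) (hfin : S.Finite) {s : G} (hs : s ∈ S) :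
    (centralizer {s}).FiniteIndex := by
  refine ⟨?_⟩
  rw [index_centralizer_singleton]
  exact Set.ncard_ne_zero_of_mem mem_conjugatesOf_self (hfin.subset (hS.conjugatesOf_subset hs))

theorem IsRCC.normal_of_index_prime (hS : IsRCC S) (hfin : S.Finite) (hgen : closure S = ⊤)
    (hdisj : ∀ s ∈ S, s ∉ H) (hp : H.index.Prime) (hcard : S.ncard < H.index) : H.Normal := by
  have hlt : ∀ s ∈ S, (centralizer {s}).index < H.index := fun s hs ↦
    (hS.index_centralizer_le_ncard hfin hs).trans_lt hcard
  have hrel : ∀ s ∈ S, H.normalCore.relIndex (centralizer {s}) = H.index := fun s hs ↦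
    have := hS.finiteIndex_centralizer hfin hs
    relIndex_normalCore_centralizer hp (hdisj s hs) (hlt s hs)
  obtain ⟨t, ht⟩ : S.Nonempty := by
    by_contra! hempty
    rw [hempty, Subgroup.closure_empty] at hgen
    exact hp.ne_one (index_eq_one.2 (eq_top_iff.2 (hgen ▸ bot_le)))
  have := hS.finiteIndex_centralizer hfin ht
  have hle : ∀ s ∈ S, centralizer {s} ≤ centralizer {t} ⊔ H.normalCore := fun s hs ↦ by
    have := finiteIndex_of_le (le_sup_left : centralizer {t} ≤ centralizer {t} ⊔ H.normalCore)
    refine le_of_index_lt_relIndex_prime le_sup_right (hrel s hs ▸ hp) ?_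
    exact hrel s hs ▸ (index_antitone le_sup_left).trans_lt (hlt t ht)
  have htop : centralizer {t} ⊔ H.normalCore = ⊤ := by
    rw [eq_top_iff, ← hgen, closure_le]
    exact fun s hs ↦ hle s hs (mem_centralizer_singleton_iff.2 rfl)
  have hindex : H.normalCore.index = H.index := by
    rw [← relIndex_top_right, ← htop, relIndex_sup_right, hrel t ht]
  have : H.FiniteIndex := ⟨hp.ne_zero⟩
  exact eq_of_le_of_index_eq H.normalCore_le hindex ▸ H.normalCore_normal

theorem IsLoopFolder.isComplement (hT : IsLoopFolder H T) : IsComplement (H : Set G) T :=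
  isComplement_iff_existsUnique_mul_inv_mem.2 fun x ↦ by
    obtain ⟨t, ⟨ht, htH⟩, huniq⟩ := hT.2 1 x
    exact ⟨⟨t, ht⟩, by simpa using htH,
      fun s hs ↦ Subtype.ext (huniq s ⟨s.2, by simpa using hs⟩)⟩

theorem IsLoopFolder.eq_one_of_mem (hT : IsLoopFolder H T) {t : G} (ht : t ∈ T) (htH : t ∈ H) :
    t = 1 :=
  (hT.2 1 1).unique ⟨ht, by simpa using htH⟩ ⟨hT.1, by simp⟩

theorem IsLoopFolder.subgroupOf (hT : IsLoopFolder H T) (hHK : H ≤ K) (hTM : T ∩ K ⊆ M)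
    (hMK : M ≤ K) : IsLoopFolder (H.subgroupOf M) (M.subtype ⁻¹' (T ∩ K)) := by
  refine ⟨⟨hT.1, K.one_mem⟩, fun g x ↦ ?_⟩
  obtain ⟨t, ⟨ht, htH⟩, huniq⟩ := hT.2 g x
  have htK : t ∈ K := by
    have hmem := hHK htH
    rwa [K.mul_mem_cancel_right (K.inv_mem (hMK g.2)), K.mul_mem_cancel_left (hMK g.2),
      K.mul_mem_cancel_left (hMK x.2), K.inv_mem_iff] at hmem
  exact ⟨⟨t, hTM ⟨ht, htK⟩⟩, ⟨⟨ht, htK⟩, htH⟩, fun s hs ↦ Subtype.ext (huniq s ⟨hs.1.1, hs.2⟩)⟩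

theorem IsLoopFolder.relIndex_eq_ncard (hT : IsLoopFolder H T) (hHK : H ≤ K) (hTM : T ∩ K ⊆ M)
    (hMK : M ≤ K) : H.relIndex M = (T ∩ K).ncard := by
  rw [relIndex, ← (hT.subgroupOf hHK hTM hMK).isComplement.ncard_right]
  exact Set.ncard_preimage_of_injective_subset_range M.subtype_injective (by simpa using hTM)

theorem IsLoopFolder.le_sup_closure (hT : IsLoopFolder H T) (hHK : H ≤ K) :
    K ≤ H ⊔ closure (T ∩ K) := by
  intro x hx
  obtain ⟨t, ⟨ht, htH⟩, -⟩ := hT.2 1 x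
  replace htH : x * t⁻¹ ∈ H := by simpa using htH
  have htK : t ∈ K := by simpa [K.mul_mem_cancel_left hx] using hHK htH
  simpa using mul_mem_sup htH (subset_closure ⟨ht, htK⟩ : t ∈ closure (T ∩ K))

/-- In terms of loops: a right conjugacy closed loop of prime order is a group. -/
theorem IsLoopFolder.normal_of_index_prime (hT : IsLoopFolder H T) (hRCC : IsRCC T)
    (hgen : closure T = ⊤) (hp : H.index.Prime) : H.Normal := by
  have hncard : T.ncard = H.index := hT.isComplement.ncard_right
  have hfin : T.Finite := Set.finite_of_ncard_pos (hncard ▸ hp.pos)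
  have hgen' : closure (T \ {1}) = ⊤ := by rw [closure_sdiff_one, hgen]
  refine hRCC.sdiff_one.normal_of_index_prime hfin.sdiff hgen' ?_ hp ?_
  · exact fun t ht htH ↦ ht.2 (hT.eq_one_of_mem ht.1 htH)
  · exact hncard ▸ Set.ncard_sdiff_singleton_lt_of_mem hT.1 hfin

theorem IsFaithfulFolder.normalCore_eq_bot (hH : IsFaithfulFolder H) : H.normalCore = ⊥ :=
  eq_bot_iff.2 fun x hx ↦ mem_bot.2 (hH x hx)

theorem IsFaithfulFolder.isMulCommutative_of_relIndex_prime [M.Normal] [(H.subgroupOf M).Normal]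
    (hH : IsFaithfulFolder H) (hp : (H.relIndex M).Prime) : IsMulCommutative M := by
  rw [← commutator_self_eq_bot_iff, eq_bot_iff, ← hH.normalCore_eq_bot]
  exact normal_le_normalCore.2 (commutator_le_of_relIndex_prime hp)

theorem IsFaithfulFolder.pow_relIndex_eq_one [M.Normal] [(H.subgroupOf M).Normal]
    (hH : IsFaithfulFolder H) {x : G} (hx : x ∈ M) : x ^ H.relIndex M = 1 := by
  refine hH _ fun g ↦ ?_
  rw [← conj_pow]
  exact (H.subgroupOf M).pow_index_mem ⟨g * x * g⁻¹, Normal.conj_mem inferInstance x hx g⟩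

theorem IsFaithfulFolder.card_inf_dvd_relIndex [M.Normal] [IsMulCommutative M]
    (hH : IsFaithfulFolder H) (hK : K.index = 2) (hKM : K ≤ H ⊔ M) :
    Nat.card (H ⊓ M : Subgroup G) ∣ H.relIndex M := by
  obtain ⟨g, hg⟩ : ∃ g, g ∉ K := by
    by_contra! hmem
    simp [(eq_top_iff' K).2 hmem] at hK
  let B := (H.subgroupOf M).comap (MulAut.conjNormal g).toMonoidHom
  have hdisj : B ⊓ H.subgroupOf M = ⊥ := by
    refine eq_bot_iff.2 fun x hx ↦ mem_bot.2 (Subtype.ext ?_)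
    have hgx : g * x * g⁻¹ ∈ H ⊓ M := ⟨hx.1, Normal.conj_mem inferInstance _ x.2 g⟩
    have hcore := mem_normalCore_of_index_two hK (hKM.trans sup_le_normalizer_inf) hg
      ⟨hx.2, x.2⟩ hgx
    exact hH x (normalCore_mono inf_le_left hcore)
  calc Nat.card (H ⊓ M : Subgroup G)
    _ = Nat.card (H.subgroupOf M) := by
      rw [← inf_subgroupOf_right]
      exact Nat.card_congr (subgroupOfEquivOfLe inf_le_right).symm.toEquiv
    _ = B.relIndex (H.subgroupOf M) := by rw [← inf_relIndex_right, hdisj, relIndex_bot_left]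
    _ ∣ B.index := relIndex_dvd_index_of_normal _ _
    _ = H.relIndex M := index_comap_of_surjective _ (MulAut.conjNormal g).surjective

theorem stmt_13_general {p : ℕ} (hp : p.Prime) (hLF : IsLoopFolder H T) (hRCC : IsRCC T)
    (hFaith : IsFaithfulFolder H) (hHK : H ≤ K) (hGK : K.index = 2) (hKH : H.relIndex K = p) :
    (Nat.card (H ⊓ closure (T ∩ K) : Subgroup G) = 1 ∨
      Nat.card (H ⊓ closure (T ∩ K) : Subgroup G) = p) ∧
    (∀ a ∈ closure (T ∩ K), ∀ b ∈ closure (T ∩ K), a * b = b * a) ∧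
    (∀ x ∈ closure (T ∩ K), x ^ p = 1) ∧
    Nat.card (closure (T ∩ K)) = p * Nat.card (H ⊓ closure (T ∩ K) : Subgroup G) := by
  have hKn : K.Normal := normal_of_index_eq_two hGK
  have hT₁ : IsRCC (T ∩ K) := hRCC.inter
  have hK₁n : (closure (T ∩ K)).Normal := hT₁.normal_closure
  have hK₁K : closure (T ∩ K) ≤ K := (closure_le K).2 Set.inter_subset_right
  have hindex : H.relIndex (closure (T ∩ K)) = p := by
    rw [hLF.relIndex_eq_ncard hHK subset_closure hK₁K, ← hKH,
      hLF.relIndex_eq_ncard hHK Set.inter_subset_right le_rfl]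
  have hprime : (H.relIndex (closure (T ∩ K))).Prime := hindex ▸ hp
  have hH₁n : (H.subgroupOf (closure (T ∩ K))).Normal :=
    (hLF.subgroupOf hHK subset_closure hK₁K).normal_of_index_prime (hT₁.preimage _)
      closure_closure_coe_preimage hprime
  have hcomm := hFaith.isMulCommutative_of_relIndex_prime hprime
  refine ⟨?_, fun a ha b hb ↦ setLike_mul_comm ha hb, ?_, ?_⟩
  · rw [← Nat.dvd_prime hp, ← hindex]
    exact hFaith.card_inf_dvd_relIndex hGK (hLF.le_sup_closure hHK)
  · exact fun x hx ↦ hindex ▸ hFaith.pow_relIndex_eq_one hx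
  · rw [← hindex, ← inf_relIndex_right, mul_comm, ← relIndex_bot_left, ← relIndex_bot_left,
      relIndex_mul_relIndex _ _ _ bot_le inf_le_right]

end

/-- With `K₁ := ⟨T ∩ K⟩` and `H₁ := H ⊓ K₁`: `|H₁| ∈ {1, p}` and `K₁` is elementary
abelian of order `p` or `p²`, with `|K₁| = p·|H₁|`. -/
theorem stmt_13 {G : Type*} [Group G] [Finite G] (p : ℕ) (hp : p.Prime) (hodd : Odd p)
    (H K : Subgroup G) (T : Set G)
    (hLF : IsLoopFolder H T) (hRCC : IsRCC T) (hFaith : IsFaithfulFolder H)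
    (hord : Nat.card T = 2 * p) (hgen : Subgroup.closure T = ⊤)
    (hHK : H ≤ K) (hGK : K.index = 2) (hKH : H.relIndex K = p) :
    (Nat.card (H ⊓ Subgroup.closure (T ∩ (K : Set G)) : Subgroup G) = 1 ∨
      Nat.card (H ⊓ Subgroup.closure (T ∩ (K : Set G)) : Subgroup G) = p) ∧
    (∀ a ∈ Subgroup.closure (T ∩ (K : Set G)), ∀ b ∈ Subgroup.closure (T ∩ (K : Set G)),
      a * b = b * a) ∧
    (∀ x ∈ Subgroup.closure (T ∩ (K : Set G)), x ^ p = 1) ∧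
    Nat.card (Subgroup.closure (T ∩ (K : Set G))) =
      p * Nat.card (H ⊓ Subgroup.closure (T ∩ (K : Set G)) : Subgroup G) :=
  stmt_13_general hp hLF hRCC hFaith hHK hGK hKH
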